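/- arXiv:1707.00052 — 3 statements merged into one kernel-verified Lean document; each statement's English description precedes it below -/
import Mathlib

section
/- For all integers q ≥ 2, ℓ ≥ 1, t ≥ 1 and n ≥ ℓ, a code C ⊆ Z_q^n is t-tandem-deletion correcting (for deletions of length ℓ) if and only if d_{τ,ℓ}(c₁, c₂) ≥ 2t+1 for all distinct c₁, c₂ ∈ C. -/
/-!
Write `σ(x)` for the `ℓ`-zero signature of the derivative of `x`. A tandem deletion `uvvw ↦ uvw`
removes a block of `ℓ` zeros from the derivative, since the derivative of `uvvw` splits as those of
`uv`, `vv`, `vw`, and the middle one vanishes; conversely every block of `ℓ` zeros in the derivative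
comes from a tandem square. Such a removal keeps the root and lowers one entry of `σ` by one, so it
moves a word by tandem duplication distance one, and the triangle inequality shows that words with
intersecting spheres are at distance at most `2t`.

Conversely, words `x` and `y` with equal roots both reach the word with that root and signature
`min (σ(x)) (σ(y))`, after `|σ(x) - σ(y)|₁` deletions in total. If `x` and `y` have equal lengths,
each needs the same number of deletions, that is half of their distance.
-/

namespace DupPaper

variable {α : Type*}

/-- `y` is obtained from `x` by one tandem duplication of length `ℓ`. -/
def TDup (ℓ : ℕ) (x y : List α) : Prop :=
  ∃ u v w : List α, v.length = ℓ ∧ x = u ++ v ++ w ∧ y = u ++ v ++ v ++ w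

/-- `y` is obtained from `x` by one tandem deletion of length `ℓ`. -/
def TDel (ℓ : ℕ) (x y : List α) : Prop :=
  ∃ u v w : List α, v.length = ℓ ∧ x = u ++ v ++ v ++ w ∧ y = u ++ v ++ w

/-- `y` is obtained from `x` by one palindromic duplication of length `ℓ`. -/
def PDup (ℓ : ℕ) (x y : List α) : Prop :=
  ∃ u v w : List α, v.length = ℓ ∧ x = u ++ v ++ w ∧ y = u ++ v ++ v.reverse ++ w

/-- `y` is obtained from `x` by one palindromic deletion of length `ℓ`. -/
def PDel (ℓ : ℕ) (x y : List α) : Prop :=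
  ∃ u v w : List α, v.length = ℓ ∧ x = u ++ v ++ v.reverse ++ w ∧ y = u ++ v ++ w

/-- `y` is reached from `x` by exactly `k` steps of the relation `rel`. -/
def reachK (rel : List α → List α → Prop) : ℕ → List α → List α → Prop
  | 0, x, y => x = y
  | k + 1, x, y => ∃ z, rel x z ∧ reachK rel k z y

/-- The sphere of all words reachable from `x` by at most `t` operations of type `rel`
(in particular it contains `x` itself). -/
def sphere (rel : List α → List α → Prop) (t : ℕ) (x : List α) : Set (List α) :=
  {y | ∃ k ≤ t, reachK rel k x y}

/-- A code `C` is `t`-error correcting for the error type `rel` if distinct codewords have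
disjoint spheres. -/
def Correcting (rel : List α → List α → Prop) (t : ℕ) (C : Set (List α)) : Prop :=
  ∀ c₁ ∈ C, ∀ c₂ ∈ C, (sphere rel t c₁ ∩ sphere rel t c₂).Nonempty → c₁ = c₂

/-- The list of maximal runs (maximal blocks of identical consecutive symbols) of a word. -/
def runs [DecidableEq α] : List α → List (List α)
  | [] => []
  | a :: rest =>
    match runs rest with
    | [] => [[a]]
    | r :: rs => if r.head? = some a then (a :: r) :: rs else [a] :: r :: rs

/-- `r(x)`: the number of runs of `x`. -/
def numRuns [DecidableEq α] (x : List α) : ℕ := (runs x).length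

/-- `r_i(x)`: the number of runs of `x` of length exactly `i`. -/
def numRunsEq [DecidableEq α] (x : List α) (i : ℕ) : ℕ :=
  ((runs x).filter (fun r => r.length = i)).length

/-- `r_{≥ i}(x)`: the number of runs of `x` of length at least `i`. -/
def numRunsGe [DecidableEq α] (x : List α) (i : ℕ) : ℕ :=
  ((runs x).filter (fun r => i ≤ r.length)).length

/-- `r_{I,2}(x)`: the number of runs of length exactly `2` located in the interior of `x`,
i.e. runs that are neither the first nor the last run of `x`. -/
def numInteriorRuns2 [DecidableEq α] (x : List α) : ℕ :=
  ((((runs x).drop 1).dropLast).filter (fun r => r.length = 2)).length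

/-- The second component `v` of the `ℓ`-step derivative `φ_ℓ(x) = (u, v)`:
`v = (x_{ℓ+1}, …, x_n) − (x_1, …, x_{n−ℓ})` componentwise in `Z_q`. -/
def derivV (q ℓ : ℕ) (x : List (ZMod q)) : List (ZMod q) :=
  List.zipWith (· - ·) (x.drop ℓ) x

/-- Hamming weight: the number of nonzero entries. -/
def wtH {q : ℕ} (v : List (ZMod q)) : ℕ := (v.filter (fun a => a ≠ 0)).length

/-- The lengths `(m_0, m_1, …, m_p)` of the (possibly empty) maximal zero runs of `v`,
where `v = (0^{m_0}, w_1, 0^{m_1}, w_2, …, w_p, 0^{m_p})` with all `w_i ≠ 0`. -/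
def zeroRunLengths {q : ℕ} : List (ZMod q) → List ℕ
  | [] => [0]
  | a :: rest =>
    let t := zeroRunLengths rest
    if a = 0 then
      match t with
      | [] => [1]
      | m :: ms => (m + 1) :: ms
    else 0 :: t

/-- The `ℓ`-zero signature `σ_ℓ(v) = (⌊m_0/ℓ⌋, …, ⌊m_p/ℓ⌋)` of `v = derivV q ℓ x`. -/
def sig (q ℓ : ℕ) (x : List (ZMod q)) : List ℕ :=
  (zeroRunLengths (derivV q ℓ x)).map (· / ℓ)

/-- The trunk `μ_ℓ(v)`: every maximal zero run of length `m` is shortened to length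
`m mod ℓ`. -/
def trunk (q ℓ : ℕ) (v : List (ZMod q)) : List (ZMod q) :=
  ((runs v).map (fun r =>
    if r.head? = some (0 : ZMod q) then List.replicate (r.length % ℓ) (0 : ZMod q) else r)).flatten

/-- The root `ρ_ℓ(x) = (u, μ_ℓ(v))` where `φ_ℓ(x) = (u, v)` is the `ℓ`-step derivative. -/
def root (q ℓ : ℕ) (x : List (ZMod q)) : List (ZMod q) × List (ZMod q) :=
  (x.take ℓ, trunk q ℓ (derivV q ℓ x))

/-- `ℓ1`-distance of two lists of naturals. -/
def l1diff (a b : List ℕ) : ℕ := (List.zipWith (fun s t => max s t - min s t) a b).sum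

/-- The tandem duplication distance `d_{τ,ℓ}`. -/
def tdDist (q ℓ : ℕ) (x₁ x₂ : List (ZMod q)) : ℕ∞ :=
  if root q ℓ x₁ = root q ℓ x₂ then (l1diff (sig q ℓ x₁) (sig q ℓ x₂) : ℕ∞) else ⊤

/-- The palindromic duplication `π_{i,ℓ}(x) = (u v v^R w)` at position `i`,
where `x = (u v w)`, `|u| = i`, `|v| = ℓ`. -/
def pdupAt (i ℓ : ℕ) (x : List α) : List α :=
  x.take (i + ℓ) ++ ((x.drop i).take ℓ).reverse ++ x.drop (i + ℓ)

/-- The result `(u v w)` of the palindromic deletion `π^δ_{i,ℓ}` applied to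
`x = (u v v^R w)` with `|u| = i`, `|v| = ℓ`. -/
def pdelAt (i ℓ : ℕ) (x : List α) : List α :=
  x.take (i + ℓ) ++ x.drop (i + 2 * ℓ)

/-- The palindromic deletion `π^δ_{i,ℓ}` is defined at position `i` of `x`, i.e. `x` has the
form `(u v v^R w)` with `|u| = i` and `|v| = ℓ`. -/
def PDelDefinedAt (q ℓ i : ℕ) (x : List (ZMod q)) : Prop :=
  ∃ u v w : List (ZMod q), u.length = i ∧ v.length = ℓ ∧ x = u ++ v ++ v.reverse ++ w

/-- `A(n', ℓ', ω)`: the number of words in `Z_q^{n'}` whose maximal zero runs all have length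
at most `ℓ'` and whose Hamming weight is `ω`. -/
noncomputable def Acount (q n' ℓ' ω : ℕ) : ℕ :=
  {x : Fin n' → ZMod q | wtH (List.ofFn x) = ω ∧
    ∀ r ∈ runs (List.ofFn x), r.head? = some (0 : ZMod q) → r.length ≤ ℓ'}.ncard

/-- Integer binomial coefficient with the conventions `C(a,b) = 0` for `a ≥ 0 > b` or
`0 ≤ a < b`, `C(-1,-1) = 1`, and `C(a,-1) = 0` for `a ≥ 0`. -/
def ichoose (a b : ℤ) : ℕ :=
  if a = -1 ∧ b = -1 then 1
  else if 0 ≤ a ∧ 0 ≤ b then Nat.choose a.toNat b.toNat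
  else 0

/-- `r^{(0)}(A^π_ℓ(x))`: the number of maximal blocks of consecutive all-zero columns of the
matrix `A^π_ℓ(x) ∈ Z_q^{ℓ × (n−2ℓ+1)}` whose entry in row `s` and column `c`
(`1 ≤ s ≤ ℓ`, `1 ≤ c ≤ n−2ℓ+1`) is `x_{2ℓ+c−s} − x_{c+s−1}`. -/
def zeroColBlocks (q ℓ n : ℕ) (x : List (ZMod q)) : ℕ :=
  ((runs ((List.range (n - 2 * ℓ + 1)).map (fun c =>
      (List.range ℓ).all (fun s =>
        x.getD (2 * ℓ + c - s - 1) (0 : ZMod q) = x.getD (c + s) (0 : ZMod q))))).filter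
    (fun r => r.head? = some true)).length

/-! ### Reachability -/

section Reachability

variable {β : Type*} {rel : List α → List α → Prop} {rel' : List β → List β → Prop}

theorem reachK.trans {j k : ℕ} {x y z : List α} (hxy : reachK rel j x y)
    (hyz : reachK rel k y z) : reachK rel (j + k) x z := by
  induction j generalizing x with
  | zero => obtain rfl : x = y := hxy; rwa [Nat.zero_add]
  | succ j ih =>
    obtain ⟨s, hxs, hsy⟩ := hxy
    rw [Nat.succ_add]
    exact ⟨s, hxs, ih hsy⟩

theorem reachK.map {f : List α → List β} (hf : ∀ x y, rel x y → rel' (f x) (f y)) {k : ℕ}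
    {x y : List α} (h : reachK rel k x y) : reachK rel' k (f x) (f y) := by
  induction k generalizing x with
  | zero => exact congrArg f h
  | succ k ih =>
    obtain ⟨s, hxs, hsy⟩ := h
    exact ⟨f s, hf x s hxs, ih hsy⟩

theorem reachK.exists_lift {f : List α → List β}
    (hf : ∀ x v, rel' (f x) v → ∃ y, rel x y ∧ f y = v) {k : ℕ} {x : List α} {v : List β}
    (h : reachK rel' k (f x) v) : ∃ y, reachK rel k x y ∧ f y = v := by
  induction k generalizing x with
  | zero => exact ⟨x, rfl, h⟩
  | succ k ih =>
    obtain ⟨s, hxs, hsv⟩ := h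
    obtain ⟨z, hxz, rfl⟩ := hf x s hxs
    obtain ⟨y, hzy, hyv⟩ := ih hsv
    exact ⟨y, ⟨z, hxz, hzy⟩, hyv⟩

theorem reachK.apply_eq {γ : Sort*} {g : List α → γ} (hg : ∀ x y, rel x y → g x = g y) {k : ℕ}
    {x y : List α} (h : reachK rel k x y) : g x = g y := by
  induction k generalizing x with
  | zero => exact congrArg g h
  | succ k ih =>
    obtain ⟨s, hxs, hsy⟩ := h
    exact (hg x s hxs).trans (ih hsy)

theorem reachK.length_eq {ℓ : ℕ} (hrel : ∀ x y, rel x y → x.length = y.length + ℓ) {k : ℕ}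
    {x y : List α} (h : reachK rel k x y) : x.length = y.length + k * ℓ := by
  induction k generalizing x with
  | zero => obtain rfl : x = y := h; simp
  | succ k ih =>
    obtain ⟨s, hxs, hsy⟩ := h
    rw [hrel x s hxs, ih hsy, Nat.succ_mul, Nat.add_assoc]

end Reachability

/-! ### Removing blocks of zeros -/

section ZeroBlocks

variable [Zero α]

/-- `v'` is obtained from `v` by removing a block of `ℓ` consecutive zeros. This is the effect of a
tandem deletion on the derivative of a word. -/
def ZDel (ℓ : ℕ) (v v' : List α) : Prop :=
  ∃ a b : List α, v = a ++ List.replicate ℓ 0 ++ b ∧ v' = a ++ b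

theorem ZDel.append_left {ℓ : ℕ} {v v' : List α} (a : List α) (h : ZDel ℓ v v') :
    ZDel ℓ (a ++ v) (a ++ v') := by
  obtain ⟨b, c, rfl, rfl⟩ := h
  exact ⟨a ++ b, c, by simp only [List.append_assoc], by rw [List.append_assoc]⟩

theorem reachK_zDel_append_left {ℓ k : ℕ} {v v' : List α} (a : List α)
    (h : reachK (ZDel ℓ) k v v') : reachK (ZDel ℓ) k (a ++ v) (a ++ v') :=
  h.map (f := (a ++ ·)) fun _ _ => ZDel.append_left a

theorem reachK_zDel_zeros_append (ℓ k m : ℕ) (x : List α) :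
    reachK (ZDel ℓ) k (List.replicate (m + k * ℓ) 0 ++ x) (List.replicate m 0 ++ x) := by
  induction k with
  | zero => simp [reachK]
  | succ k ih =>
    refine ⟨_, ⟨List.replicate (m + k * ℓ) 0, x, ?_, rfl⟩, ih⟩
    rw [← List.replicate_add, Nat.succ_mul, Nat.add_assoc]

-- The truncated subtraction makes the number of removals `0` when `m₁ ≤ m₂`.
theorem reachK_zDel_zeros_min {ℓ m₁ m₂ : ℕ} (h : m₁ % ℓ = m₂ % ℓ) (x : List α) :
    reachK (ZDel ℓ) (m₁ / ℓ - m₂ / ℓ) (List.replicate m₁ 0 ++ x)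
      (List.replicate (min m₁ m₂) 0 ++ x) := by
  have hm₁ : m₁ = min m₁ m₂ + (m₁ / ℓ - m₂ / ℓ) * ℓ := by
    have h₁ := Nat.mod_add_div' m₁ ℓ
    have h₂ := Nat.mod_add_div' m₂ ℓ
    rw [Nat.sub_mul]
    rcases le_total m₁ m₂ with hle | hle <;>
      have := Nat.mul_le_mul_right ℓ (Nat.div_le_div_right (c := ℓ) hle) <;> omega
  conv => arg 3; rw [hm₁]
  exact reachK_zDel_zeros_append ..

@[elab_as_elim]
theorem zeroRun_induction {motive : List α → Prop} (zeros : ∀ m, motive (List.replicate m 0))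
    (zeros_cons : ∀ m w v, w ≠ 0 → motive v → motive (List.replicate m 0 ++ w :: v))
    (v : List α) : motive v := by
  suffices h : ∀ m, motive (List.replicate m 0 ++ v) from h 0
  induction v with
  | nil => simpa using zeros
  | cons a v ih =>
    intro m
    by_cases ha : a = 0
    · simpa [ha, List.replicate_succ'] using ih (m + 1)
    · exact zeros_cons m a v ha (ih 0)

theorem zeros_append_cons_inj {m₁ m₂ : ℕ} {w₁ w₂ : α} (h₁ : w₁ ≠ 0) (h₂ : w₂ ≠ 0)
    {v₁ v₂ : List α}
    (h : List.replicate m₁ 0 ++ w₁ :: v₁ = List.replicate m₂ 0 ++ w₂ :: v₂) :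
    m₁ = m₂ ∧ w₁ = w₂ ∧ v₁ = v₂ := by
  induction m₁ generalizing m₂ with
  | zero => cases m₂ <;> simp_all [List.replicate_succ]
  | succ m₁ ih =>
    cases m₂ with
    | zero => simp [List.replicate_succ, h₂.symm] at h
    | succ m₂ => simpa using ih (by simpa [List.replicate_succ] using h)

theorem zeros_ne_zeros_append_cons {m₁ m₂ : ℕ} {w : α} (hw : w ≠ 0) {v : List α} :
    List.replicate m₁ 0 ≠ List.replicate m₂ 0 ++ w :: v := fun h =>
  hw (List.eq_of_mem_replicate (h ▸ by simp : w ∈ List.replicate m₁ 0))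

end ZeroBlocks

/-! ### Trunk and signature -/

section Runs

variable [DecidableEq α]

theorem exists_runs_cons (a : α) (l : List α) : ∃ r rs, runs (a :: l) = (a :: r) :: rs := by
  rw [runs]
  split
  · exact ⟨_, _, rfl⟩
  · split_ifs <;> exact ⟨_, _, rfl⟩

theorem runs_replicate_succ (a : α) (m : ℕ) :
    runs (List.replicate (m + 1) a) = [List.replicate (m + 1) a] := by
  induction m with
  | zero => simp [runs]
  | succ m ih =>
    rw [List.replicate_succ, runs, ih]
    simp [List.replicate_succ]

theorem runs_replicate_succ_append {a w : α} (hw : w ≠ a) (m : ℕ) (l : List α) :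
    runs (List.replicate (m + 1) a ++ w :: l) = List.replicate (m + 1) a :: runs (w :: l) := by
  induction m with
  | zero =>
    obtain ⟨r, rs, hr⟩ := exists_runs_cons w l
    rw [List.replicate_one, List.cons_append, List.nil_append, runs, hr]
    simp [hw]
  | succ m ih =>
    rw [List.replicate_succ, List.cons_append, runs, ih]
    simp [List.replicate_succ]

end Runs

section TrunkSignature

variable {q ℓ : ℕ}

/-- The `ℓ`-zero signature `σ_ℓ(v)` of an arbitrary vector `v`; `sig q ℓ x` is its value at the
derivative of the word `x`. -/
def zeroSig (ℓ : ℕ) (v : List (ZMod q)) : List ℕ := (zeroRunLengths v).map (· / ℓ)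

theorem trunk_zeros (ℓ m : ℕ) :
    trunk q ℓ (List.replicate m 0) = List.replicate (m % ℓ) 0 := by
  cases m with
  | zero => simp [trunk, runs]
  | succ m => simp [trunk, runs_replicate_succ, List.head?_replicate]

theorem trunk_cons {w : ZMod q} (hw : w ≠ 0) (v : List (ZMod q)) :
    trunk q ℓ (w :: v) = w :: trunk q ℓ v := by
  cases v with
  | nil => simp [trunk, runs, hw]
  | cons a v =>
    obtain ⟨r, rs, hr⟩ := exists_runs_cons a v
    rw [trunk, trunk, runs, hr]
    by_cases ha : a = w
    · simp [ha, hw]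
    · simp [ha, hw]

theorem trunk_zeros_append (m : ℕ) {w : ZMod q} (hw : w ≠ 0) (v : List (ZMod q)) :
    trunk q ℓ (List.replicate m 0 ++ w :: v) = List.replicate (m % ℓ) 0 ++ w :: trunk q ℓ v := by
  rw [← trunk_cons hw]
  cases m with
  | zero => simp
  | succ m => simp [trunk, runs_replicate_succ_append hw, List.head?_replicate]

theorem zeroRunLengths_zeros (m : ℕ) : zeroRunLengths (List.replicate m (0 : ZMod q)) = [m] := by
  induction m with
  | zero => rfl
  | succ m ih => simp [List.replicate_succ, zeroRunLengths, ih]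

theorem zeroRunLengths_zeros_append (m : ℕ) {w : ZMod q} (hw : w ≠ 0) (v : List (ZMod q)) :
    zeroRunLengths (List.replicate m 0 ++ w :: v) = m :: zeroRunLengths v := by
  induction m with
  | zero => simp [zeroRunLengths, hw]
  | succ m ih => simp [List.replicate_succ, zeroRunLengths, ih]

theorem zeroSig_zeros (m : ℕ) : zeroSig ℓ (List.replicate m (0 : ZMod q)) = [m / ℓ] := by
  simp [zeroSig, zeroRunLengths_zeros]

theorem zeroSig_zeros_append (m : ℕ) {w : ZMod q} (hw : w ≠ 0) (v : List (ZMod q)) :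
    zeroSig ℓ (List.replicate m 0 ++ w :: v) = m / ℓ :: zeroSig ℓ v := by
  simp [zeroSig, zeroRunLengths_zeros_append m hw]

theorem zeroRunLengths_trunk (v : List (ZMod q)) :
    zeroRunLengths (trunk q ℓ v) = (zeroRunLengths v).map (· % ℓ) := by
  induction v using zeroRun_induction with
  | zeros m => simp [trunk_zeros, zeroRunLengths_zeros]
  | zeros_cons m w v hw ih =>
    simp [trunk_zeros_append m hw, zeroRunLengths_zeros_append _ hw, ih]

theorem length_zeroSig_eq_of_trunk_eq {v₁ v₂ : List (ZMod q)}
    (h : trunk q ℓ v₁ = trunk q ℓ v₂) : (zeroSig ℓ v₁).length = (zeroSig ℓ v₂).length := by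
  simpa [zeroSig, zeroRunLengths_trunk] using congrArg (fun v => (zeroRunLengths v).length) h

end TrunkSignature

theorem l1diff_cons_cons (a b : ℕ) (s t : List ℕ) :
    l1diff (a :: s) (b :: t) = Nat.dist a b + l1diff s t := by
  simp [l1diff, Nat.dist_eq_max_sub_min]

theorem l1diff_self (s : List ℕ) : l1diff s s = 0 := by
  simp [l1diff]

theorem l1diff_comm (s t : List ℕ) : l1diff s t = l1diff t s := by
  simp only [l1diff, List.zipWith_comm (as := s), max_comm, min_comm]

theorem l1diff_triangle {s t : List ℕ} (r : List ℕ) (h : s.length ≤ t.length) :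
    l1diff s r ≤ l1diff s t + l1diff t r := by
  induction s generalizing t r with
  | nil => simp [l1diff]
  | cons a s ih =>
    match t, r with
    | _, [] => simp [l1diff]
    | b :: t, c :: r =>
      have hdist := Nat.dist.triangle_inequality a b c
      have hrec := ih r (Nat.le_of_succ_le_succ h)
      simp only [l1diff_cons_cons]
      omega

section Invariants

variable {q ℓ : ℕ} {v v' : List (ZMod q)}

theorem trunk_zeros_add_append (m : ℕ) (v : List (ZMod q)) :
    trunk q ℓ (List.replicate (m + ℓ) 0 ++ v) = trunk q ℓ (List.replicate m 0 ++ v) := by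
  cases v using zeroRun_induction with
  | zeros j =>
    rw [← List.replicate_add, ← List.replicate_add, Nat.add_right_comm, trunk_zeros, trunk_zeros,
      Nat.add_mod_right]
  | zeros_cons j w v hw =>
    rw [← List.append_assoc, ← List.append_assoc, ← List.replicate_add, ← List.replicate_add,
      Nat.add_right_comm, trunk_zeros_append _ hw, trunk_zeros_append _ hw, Nat.add_mod_right]

theorem ZDel.trunk_eq (h : ZDel ℓ v v') : trunk q ℓ v = trunk q ℓ v' := by
  obtain ⟨a, b, rfl, rfl⟩ := h
  induction a using zeroRun_induction with
  | zeros m => rw [← List.replicate_add, trunk_zeros_add_append]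
  | zeros_cons m w a hw ih =>
    simp only [List.append_assoc, List.cons_append, trunk_zeros_append m hw] at ih ⊢
    rw [ih]

theorem l1diff_zeroSig_zeros_add_append (hℓ : 0 < ℓ) (m : ℕ) (v : List (ZMod q)) :
    l1diff (zeroSig ℓ (List.replicate (m + ℓ) 0 ++ v)) (zeroSig ℓ (List.replicate m 0 ++ v)) =
      1 := by
  have hdist (k : ℕ) : Nat.dist ((k + ℓ) / ℓ) (k / ℓ) = 1 := by
    simp [Nat.add_div_right k hℓ, Nat.dist]
  cases v using zeroRun_induction with
  | zeros j =>
    rw [← List.replicate_add, ← List.replicate_add, Nat.add_right_comm, zeroSig_zeros,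
      zeroSig_zeros, l1diff_cons_cons, hdist, l1diff_self]
  | zeros_cons j w v hw =>
    rw [← List.append_assoc, ← List.append_assoc, ← List.replicate_add, ← List.replicate_add,
      Nat.add_right_comm, zeroSig_zeros_append _ hw, zeroSig_zeros_append _ hw, l1diff_cons_cons,
      hdist, l1diff_self]

theorem ZDel.l1diff_zeroSig (hℓ : 0 < ℓ) (h : ZDel ℓ v v') :
    l1diff (zeroSig ℓ v) (zeroSig ℓ v') = 1 := by
  obtain ⟨a, b, rfl, rfl⟩ := h
  induction a using zeroRun_induction with
  | zeros m => rw [← List.replicate_add, l1diff_zeroSig_zeros_add_append hℓ]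
  | zeros_cons m w a hw ih =>
    simpa only [List.append_assoc, List.cons_append, zeroSig_zeros_append m hw, l1diff_cons_cons,
      Nat.dist_self, Nat.zero_add] using ih

end Invariants

theorem exists_reachK_zDel_of_trunk_eq {q ℓ : ℕ} {v₁ v₂ : List (ZMod q)}
    (h : trunk q ℓ v₁ = trunk q ℓ v₂) :
    ∃ v k₁ k₂, reachK (ZDel ℓ) k₁ v₁ v ∧ reachK (ZDel ℓ) k₂ v₂ v ∧
      k₁ + k₂ = l1diff (zeroSig ℓ v₁) (zeroSig ℓ v₂) := by
  induction v₁ using zeroRun_induction generalizing v₂ with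
  | zeros m₁ =>
    cases v₂ using zeroRun_induction with
    | zeros m₂ =>
      have hm : m₁ % ℓ = m₂ % ℓ := by simpa [trunk_zeros] using congrArg List.length h
      refine ⟨List.replicate (min m₁ m₂) 0, m₁ / ℓ - m₂ / ℓ, m₂ / ℓ - m₁ / ℓ, ?_, ?_, ?_⟩
      · simpa using reachK_zDel_zeros_min hm ([] : List (ZMod q))
      · simpa [min_comm] using reachK_zDel_zeros_min hm.symm ([] : List (ZMod q))
      · simp [zeroSig_zeros, l1diff_cons_cons, l1diff_self, Nat.dist]
    | zeros_cons m₂ w v₂ hw =>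
      rw [trunk_zeros, trunk_zeros_append m₂ hw] at h
      exact absurd h (zeros_ne_zeros_append_cons hw)
  | zeros_cons m₁ w v₁ hw ih =>
    cases v₂ using zeroRun_induction with
    | zeros m₂ =>
      rw [trunk_zeros, trunk_zeros_append m₁ hw] at h
      exact absurd h.symm (zeros_ne_zeros_append_cons hw)
    | zeros_cons m₂ w' v₂ hw' =>
      rw [trunk_zeros_append m₁ hw, trunk_zeros_append m₂ hw'] at h
      obtain ⟨hm, rfl, hv⟩ := zeros_append_cons_inj hw hw' h
      obtain ⟨v, k₁, k₂, h₁, h₂, hk⟩ := ih hv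
      have hlift {k : ℕ} {v' : List (ZMod q)} (h : reachK (ZDel ℓ) k v' v) (m : ℕ) :
          reachK (ZDel ℓ) k (List.replicate m 0 ++ w :: v') (List.replicate m 0 ++ w :: v) :=
        reachK_zDel_append_left _ (reachK_zDel_append_left [w] h)
      refine ⟨List.replicate (min m₁ m₂) 0 ++ w :: v, _, _,
        (reachK_zDel_zeros_min hm _).trans (hlift h₁ _),
        (min_comm m₁ m₂ ▸ reachK_zDel_zeros_min hm.symm _).trans (hlift h₂ _), ?_⟩
      rw [zeroSig_zeros_append m₁ hw, zeroSig_zeros_append m₂ hw, l1diff_cons_cons, ← hk, Nat.dist]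
      omega

/-! ### Tandem deletions and the derivative -/

section Derivative

variable {q ℓ : ℕ} {x y : List (ZMod q)}

theorem length_derivV (x : List (ZMod q)) : (derivV q ℓ x).length = x.length - ℓ := by
  simp [derivV]

theorem getElem_derivV {i : ℕ} (hi : i < (derivV q ℓ x).length) :
    (derivV q ℓ x)[i] =
      x[ℓ + i]'(by rw [length_derivV] at hi; omega) -
        x[i]'(by rw [length_derivV] at hi; omega) := by
  simp [derivV]

theorem eq_of_take_eq_of_derivV_eq (hℓ : 0 < ℓ) (htake : x.take ℓ = y.take ℓ)
    (hderiv : derivV q ℓ x = derivV q ℓ y) : x = y := by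
  have hlen : x.length = y.length := by
    have h₁ := congrArg List.length htake
    have h₂ := congrArg List.length hderiv
    simp only [List.length_take, length_derivV] at h₁ h₂
    omega
  refine List.ext_getElem hlen fun i => ?_
  induction i using Nat.strong_induction_on with
  | _ i ih =>
    intro hx hy
    rcases lt_or_ge i ℓ with hi | hi
    · simpa [List.getElem?_take, hi, hx, hy] using congrArg (·[i]?) htake
    · obtain ⟨j, rfl⟩ := Nat.exists_eq_add_of_le hi
      have hj : j < (derivV q ℓ x).length := by rw [length_derivV]; omega
      have hsub := getElem_derivV hj
      simp only [hderiv, getElem_derivV] at hsub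
      rw [ih j (by omega) (by omega) (by omega)] at hsub
      exact (sub_left_injective hsub).symm

theorem derivV_append_eq_zipWith {v : List (ZMod q)} (hv : v.length = ℓ) (u : List (ZMod q)) :
    derivV q ℓ (u ++ v) = List.zipWith (· - ·) ((u ++ v).drop ℓ) u := by
  have hlen : ((u ++ v).drop ℓ).length = u.length := by simp [hv]
  simpa [derivV] using
    List.zipWith_append (f := fun a b : ZMod q => a - b) (l₁' := []) (l₂' := v) hlen

theorem derivV_append {v : List (ZMod q)} (hv : v.length = ℓ) (u z : List (ZMod q)) :
    derivV q ℓ (u ++ v ++ z) = derivV q ℓ (u ++ v) ++ derivV q ℓ (v ++ z) := by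
  have hdrop : (u ++ v ++ z).drop ℓ = (u ++ v).drop ℓ ++ z :=
    List.drop_append_of_le_length (by simp [hv])
  have hlen : ((u ++ v).drop ℓ).length = u.length := by simp [hv]
  rw [derivV_append_eq_zipWith hv, derivV, derivV, hdrop, List.append_assoc u v z,
    List.zipWith_append hlen, List.drop_left' hv]

theorem derivV_append_self {v : List (ZMod q)} (hv : v.length = ℓ) :
    derivV q ℓ (v ++ v) = List.replicate ℓ 0 := by
  rw [derivV_append_eq_zipWith hv, List.drop_left' hv, List.zipWith_self]
  simp [hv]

theorem TDel.length_eq {x y : List α} (h : TDel ℓ x y) : x.length = y.length + ℓ := by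
  obtain ⟨u, v, w, rfl, rfl, rfl⟩ := h
  simp only [List.length_append]
  omega

theorem TDel.take_eq {x y : List α} (h : TDel ℓ x y) : x.take ℓ = y.take ℓ := by
  obtain ⟨u, v, w, rfl, rfl, rfl⟩ := h
  have hle : v.length ≤ (u ++ v).length := by simp
  rw [List.append_assoc (u ++ v), List.take_append_of_le_length hle,
    List.take_append_of_le_length hle]

theorem TDel.zDel_derivV (h : TDel ℓ x y) : ZDel ℓ (derivV q ℓ x) (derivV q ℓ y) := by
  obtain ⟨u, v, w, hv, rfl, rfl⟩ := h
  exact ⟨derivV q ℓ (u ++ v), derivV q ℓ (v ++ w),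
    by rw [derivV_append hv (u ++ v), derivV_append hv u, derivV_append_self hv],
    derivV_append hv u w⟩

theorem exists_tDel_of_zDel_derivV (hℓ : 0 < ℓ) {v' : List (ZMod q)}
    (h : ZDel ℓ (derivV q ℓ x) v') : ∃ y, TDel ℓ x y ∧ derivV q ℓ y = v' := by
  obtain ⟨a, b, hx, rfl⟩ := h
  have hlen : x.length - ℓ = a.length + ℓ + b.length := by
    simpa [length_derivV, Nat.add_assoc] using congrArg List.length hx
  obtain ⟨u, v, s, w, hu, hv, hs, rfl⟩ : ∃ u v s w, u.length = a.length ∧ v.length = ℓ ∧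
      s.length = ℓ ∧ x = u ++ v ++ s ++ w :=
    ⟨x.take a.length, (x.drop a.length).take ℓ, ((x.drop a.length).drop ℓ).take ℓ,
      ((x.drop a.length).drop ℓ).drop ℓ, by simp; omega, by simp; omega, by simp; omega, by simp⟩
  rw [derivV_append hs (u ++ v), derivV_append hv u] at hx
  obtain ⟨hx', hb⟩ := List.append_inj hx (by simp [length_derivV, hu, hv, hs])
  obtain ⟨ha, hzeros⟩ := List.append_inj hx' (by simp [length_derivV, hu, hv])
  have hsq : v ++ s = v ++ v :=
    eq_of_take_eq_of_derivV_eq hℓ (by rw [List.take_left' hv, List.take_left' hv])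
      (hzeros.trans (derivV_append_self hv).symm)
  obtain rfl : s = v := List.append_cancel_left hsq
  exact ⟨u ++ s ++ w, ⟨u, s, w, hs, rfl, rfl⟩, by rw [derivV_append hs, ha, hb]⟩

theorem exists_reachK_tDel_of_root_eq (hℓ : 0 < ℓ) (h : root q ℓ x = root q ℓ y) :
    ∃ z k₁ k₂, reachK (TDel ℓ) k₁ x z ∧ reachK (TDel ℓ) k₂ y z ∧
      k₁ + k₂ = l1diff (sig q ℓ x) (sig q ℓ y) := by
  obtain ⟨htake, htrunk⟩ := Prod.mk.inj h
  obtain ⟨v, k₁, k₂, h₁, h₂, hk⟩ := exists_reachK_zDel_of_trunk_eq htrunk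
  obtain ⟨z₁, hz₁, hv₁⟩ := h₁.exists_lift fun _ _ => exists_tDel_of_zDel_derivV hℓ
  obtain ⟨z₂, hz₂, hv₂⟩ := h₂.exists_lift fun _ _ => exists_tDel_of_zDel_derivV hℓ
  have htake₁ := hz₁.apply_eq fun _ _ => TDel.take_eq
  have htake₂ := hz₂.apply_eq fun _ _ => TDel.take_eq
  obtain rfl : z₁ = z₂ := eq_of_take_eq_of_derivV_eq hℓ
    (htake₁.symm.trans (htake.trans htake₂)) (hv₁.trans hv₂.symm)
  exact ⟨z₁, k₁, k₂, hz₁, hz₂, hk⟩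

end Derivative

/-! ### The tandem duplication distance -/

section Distance

variable {q ℓ : ℕ} {x y : List (ZMod q)}

theorem tdDist_of_root_eq (h : root q ℓ x = root q ℓ y) :
    tdDist q ℓ x y = l1diff (sig q ℓ x) (sig q ℓ y) := if_pos h

theorem tdDist_of_root_ne (h : root q ℓ x ≠ root q ℓ y) : tdDist q ℓ x y = ⊤ := if_neg h

theorem tdDist_self (x : List (ZMod q)) : tdDist q ℓ x x = 0 := by
  simp [tdDist, l1diff_self]

theorem tdDist_comm (x y : List (ZMod q)) : tdDist q ℓ x y = tdDist q ℓ y x := by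
  simp only [tdDist, eq_comm (a := root q ℓ x), l1diff_comm (sig q ℓ x)]

theorem tdDist_triangle (x y z : List (ZMod q)) :
    tdDist q ℓ x z ≤ tdDist q ℓ x y + tdDist q ℓ y z := by
  by_cases hxy : root q ℓ x = root q ℓ y
  · by_cases hyz : root q ℓ y = root q ℓ z
    · have hlen : (sig q ℓ x).length = (sig q ℓ y).length :=
        length_zeroSig_eq_of_trunk_eq (Prod.mk.inj hxy).2
      rw [tdDist_of_root_eq hxy, tdDist_of_root_eq hyz, tdDist_of_root_eq (hxy.trans hyz)]
      exact_mod_cast l1diff_triangle (sig q ℓ z) hlen.le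
    · simp [tdDist_of_root_ne hyz]
  · simp [tdDist_of_root_ne hxy]

theorem TDel.tdDist_eq_one (hℓ : 0 < ℓ) (h : TDel ℓ x y) : tdDist q ℓ x y = 1 := by
  have hroot : root q ℓ x = root q ℓ y := Prod.ext h.take_eq h.zDel_derivV.trunk_eq
  have hsig : l1diff (sig q ℓ x) (sig q ℓ y) = 1 := h.zDel_derivV.l1diff_zeroSig hℓ
  rw [tdDist_of_root_eq hroot, hsig, Nat.cast_one]

theorem tdDist_le_of_reachK (hℓ : 0 < ℓ) {k : ℕ} (h : reachK (TDel ℓ) k x y) :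
    tdDist q ℓ x y ≤ k := by
  induction k generalizing x with
  | zero => obtain rfl : x = y := h; simp [tdDist_self]
  | succ k ih =>
    obtain ⟨z, hxz, hzy⟩ := h
    calc tdDist q ℓ x y ≤ tdDist q ℓ x z + tdDist q ℓ z y := tdDist_triangle x z y
      _ ≤ 1 + k := add_le_add (hxz.tdDist_eq_one hℓ).le (ih hzy)
      _ = (k + 1 : ℕ) := by rw [add_comm, Nat.cast_succ]

theorem sphere_tDel_inter_nonempty_iff (hℓ : 0 < ℓ) (hlen : x.length = y.length) (t : ℕ) :
    (sphere (TDel ℓ) t x ∩ sphere (TDel ℓ) t y).Nonempty ↔ tdDist q ℓ x y ≤ (2 * t : ℕ) := by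
  constructor
  · rintro ⟨z, ⟨k₁, hk₁, h₁⟩, ⟨k₂, hk₂, h₂⟩⟩
    calc tdDist q ℓ x y ≤ tdDist q ℓ x z + tdDist q ℓ z y := tdDist_triangle x z y
      _ ≤ k₁ + k₂ := add_le_add (tdDist_le_of_reachK hℓ h₁)
          (tdDist_comm z y ▸ tdDist_le_of_reachK hℓ h₂)
      _ ≤ (2 * t : ℕ) := by exact_mod_cast (by omega : k₁ + k₂ ≤ 2 * t)
  · intro hdist
    have hroot : root q ℓ x = root q ℓ y := by
      by_contra hne
      rw [tdDist_of_root_ne hne] at hdist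
      exact ENat.natCast_ne_top _ (top_le_iff.1 hdist)
    obtain ⟨z, k₁, k₂, h₁, h₂, hk⟩ := exists_reachK_tDel_of_root_eq hℓ hroot
    have hk₁₂ : k₁ = k₂ := by
      have hlen₁ := h₁.length_eq fun _ _ => TDel.length_eq
      have hlen₂ := h₂.length_eq fun _ _ => TDel.length_eq
      exact Nat.eq_of_mul_eq_mul_right hℓ (by omega)
    have hle : k₁ + k₂ ≤ 2 * t := by
      rw [hk]
      exact_mod_cast tdDist_of_root_eq hroot ▸ hdist
    exact ⟨z, ⟨k₁, by omega, h₁⟩, ⟨k₂, by omega, h₂⟩⟩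

end Distance

/-- A code `C ⊆ Z_q^n` is `t`-tandem-deletion correcting (length `ℓ`) iff
`d_{τ,ℓ}(c₁,c₂) ≥ 2t+1` for all distinct codewords. -/
theorem stmt2 (q ℓ t n : ℕ) (hq : 2 ≤ q) (hℓ : 1 ≤ ℓ) (ht : 1 ≤ t) (hn : ℓ ≤ n)
    (C : Set (List (ZMod q))) (hC : ∀ c ∈ C, c.length = n) :
    Correcting (TDel ℓ) t C ↔
      ∀ c₁ ∈ C, ∀ c₂ ∈ C, c₁ ≠ c₂ → ((2 * t + 1 : ℕ) : ℕ∞) ≤ tdDist q ℓ c₁ c₂ := by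
  refine forall₂_congr fun c₁ h₁ => forall₂_congr fun c₂ h₂ => ?_
  rw [sphere_tDel_inter_nonempty_iff hℓ ((hC c₁ h₁).trans (hC c₂ h₂).symm), ← not_imp_not,
    not_le, Nat.cast_succ, ENat.add_one_le_iff (ENat.natCast_ne_top _), ne_eq]

end DupPaper
end

section
/- The binary code C = {(0,1,1,0,1,0), (0,1,1,1,1,0)} ⊆ Z_2^6 is single palindromic-duplication correcting for duplications of length ℓ = 2 (the duplication spheres S_{π,2}((011010)) = {(011010), (01101010), (01111010), (01100110), (01101100), (01101001)} and S_{π,2}((011110)) = {(011110), (01101110), (01111110), (01111001)} are disjoint), but it is not single palindromic-deletion correcting for deletions of length ℓ = 2 (indeed (0,1,1,0) lies in both deletion spheres S_{π^δ,2}((011010)) and S_{π^δ,2}((011110))). In particular, a single palindromic-duplication correcting code need not be single palindromic-deletion correcting. -/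
/-! A word of length `n` has one duplication of length `ℓ` for each position `i ≤ n - ℓ`, so a
duplication sphere of radius one is an explicitly computable finite set, and the disjointness of
two such spheres is decidable. A palindromic deletion is the converse of a palindromic duplication,
so a word lies in the deletion sphere of `c` exactly when `c` lies in its duplication sphere. Thus
deletion correction fails because both codewords are duplications of `0110`, namely `(01)(10)10`
and `0(11)(11)0`, although their own duplication spheres are disjoint. -/

namespace DupPaper

variable {α : Type*}

section Sphere

variable {rel : List α → List α → Prop} {x y : List α}

theorem reachK_succ_iff_exists_last {k : ℕ} :
    reachK rel (k + 1) x y ↔ ∃ z, reachK rel k x z ∧ rel z y := by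
  induction k generalizing x with
  | zero => simp only [reachK, exists_eq_right, exists_eq_left']
  | succ k ih =>
    calc reachK rel (k + 2) x y
      _ ↔ ∃ a, rel x a ∧ ∃ z, reachK rel k a z ∧ rel z y := exists_congr fun _ ↦ and_congr_right' ih
      _ ↔ ∃ z, (∃ a, rel x a ∧ reachK rel k a z) ∧ rel z y := by tauto

theorem reachK_flip {k : ℕ} : reachK (flip rel) k x y ↔ reachK rel k y x := by
  induction k generalizing x with
  | zero => exact eq_comm
  | succ k ih =>
    calc reachK (flip rel) (k + 1) x y
      _ ↔ ∃ z, rel z x ∧ reachK rel k y z := exists_congr fun _ ↦ and_congr_right' ih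
      _ ↔ reachK rel (k + 1) y x := by simp only [reachK_succ_iff_exists_last, and_comm]

theorem mem_sphere_flip {t : ℕ} : y ∈ sphere (flip rel) t x ↔ x ∈ sphere rel t y :=
  exists_congr fun _ ↦ and_congr_right' reachK_flip

theorem mem_sphere_one : y ∈ sphere rel 1 x ↔ y = x ∨ rel x y := by
  constructor
  · rintro ⟨k, hk, h⟩
    interval_cases k
    · exact Or.inl h.symm
    · obtain ⟨z, hz, rfl⟩ := h
      exact Or.inr hz
  · rintro (rfl | h)
    · exact ⟨0, zero_le_one, rfl⟩
    · exact ⟨1, le_rfl, y, h, rfl⟩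

theorem correcting_iff_pairwiseDisjoint {t : ℕ} {C : Set (List α)} :
    Correcting rel t C ↔ C.PairwiseDisjoint (sphere rel t) := by
  simp only [Correcting, Set.PairwiseDisjoint, Set.Pairwise, Function.onFun,
    Set.disjoint_iff_inter_eq_empty, ← Set.not_nonempty_iff_eq_empty, ne_eq, not_imp_not]

theorem correcting_pair_iff {t : ℕ} (hxy : x ≠ y) :
    Correcting rel t {x, y} ↔ Disjoint (sphere rel t x) (sphere rel t y) := by
  rw [correcting_iff_pairwiseDisjoint, Set.PairwiseDisjoint, Set.pairwise_pair,
    forall_prop_of_true hxy]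
  exact and_iff_left_of_imp fun h ↦ Disjoint.symm h

end Sphere

section Palindromic

variable {ℓ : ℕ} {x y : List α}

theorem pDup_iff_exists_pdupAt :
    PDup ℓ x y ↔ ∃ i, i + ℓ ≤ x.length ∧ y = pdupAt i ℓ x := by
  constructor
  · rintro ⟨u, v, w, rfl, rfl, rfl⟩
    exact ⟨u.length, by simp, by simp [pdupAt, List.take_append]⟩
  · rintro ⟨i, hi, rfl⟩
    refine ⟨x.take i, (x.drop i).take ℓ, x.drop (i + ℓ), ?_, ?_, ?_⟩
    · rw [List.length_take, List.length_drop]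
      omega
    · rw [← List.take_add, List.take_append_drop]
    · rw [pdupAt, List.take_add]

theorem flip_pDup : flip (PDup ℓ) = (PDel ℓ : List α → List α → Prop) := by
  ext x y
  simp only [flip, PDup, PDel, and_comm]

theorem mem_sphere_pDel {t : ℕ} : y ∈ sphere (PDel ℓ) t x ↔ x ∈ sphere (PDup ℓ) t y := by
  rw [← flip_pDup, mem_sphere_flip]

/-- The duplication sphere of radius one as a finite set computed from the admissible positions
`i ≤ |x| - ℓ`. They are written `i < |x| + 1 - ℓ`, so that there are none when `|x| < ℓ`. -/
def pdupSphere [DecidableEq α] (ℓ : ℕ) (x : List α) : Finset (List α) :=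
  insert x ((Finset.range (x.length + 1 - ℓ)).image fun i ↦ pdupAt i ℓ x)

theorem sphere_pDup_one [DecidableEq α] : sphere (PDup ℓ) 1 x = pdupSphere ℓ x := by
  ext y
  simp only [mem_sphere_one, pDup_iff_exists_pdupAt, pdupSphere, Finset.mem_coe, Finset.mem_insert,
    Finset.mem_image, Finset.mem_range, Nat.lt_sub_iff_add_lt, Nat.lt_succ_iff, eq_comm (a := y)]

end Palindromic

/-- The code `C = {011010, 011110} ⊆ Z_2^6` is single palindromic-duplication correcting
(length 2) but not single palindromic-deletion correcting (length 2). -/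
theorem stmt4 :
    sphere (PDup 2) 1 ([0,1,1,0,1,0] : List (ZMod 2)) =
      {[0,1,1,0,1,0], [0,1,1,0,1,0,1,0], [0,1,1,1,1,0,1,0], [0,1,1,0,0,1,1,0],
        [0,1,1,0,1,1,0,0], [0,1,1,0,1,0,0,1]} ∧
    sphere (PDup 2) 1 ([0,1,1,1,1,0] : List (ZMod 2)) =
      {[0,1,1,1,1,0], [0,1,1,0,1,1,1,0], [0,1,1,1,1,1,1,0], [0,1,1,1,1,0,0,1]} ∧
    Disjoint (sphere (PDup 2) 1 ([0,1,1,0,1,0] : List (ZMod 2)))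
      (sphere (PDup 2) 1 ([0,1,1,1,1,0] : List (ZMod 2))) ∧
    Correcting (PDup 2) 1 ({[0,1,1,0,1,0], [0,1,1,1,1,0]} : Set (List (ZMod 2))) ∧
    ([0,1,1,0] : List (ZMod 2)) ∈
      sphere (PDel 2) 1 ([0,1,1,0,1,0] : List (ZMod 2)) ∩
        sphere (PDel 2) 1 ([0,1,1,1,1,0] : List (ZMod 2)) ∧
    ¬ Correcting (PDel 2) 1 ({[0,1,1,0,1,0], [0,1,1,1,1,0]} : Set (List (ZMod 2))) := by
  have h_dup : Disjoint (sphere (PDup 2) 1 ([0,1,1,0,1,0] : List (ZMod 2)))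
      (sphere (PDup 2) 1 ([0,1,1,1,1,0] : List (ZMod 2))) := by
    rw [sphere_pDup_one, sphere_pDup_one, Finset.disjoint_coe]
    decide
  have h_del : ([0,1,1,0] : List (ZMod 2)) ∈
      sphere (PDel 2) 1 ([0,1,1,0,1,0] : List (ZMod 2)) ∩
        sphere (PDel 2) 1 ([0,1,1,1,1,0] : List (ZMod 2)) := by
    rw [Set.mem_inter_iff, mem_sphere_pDel, mem_sphere_pDel, sphere_pDup_one, Finset.mem_coe,
      Finset.mem_coe]
    decide
  have h_ne : ([0,1,1,0,1,0] : List (ZMod 2)) ≠ [0,1,1,1,1,0] := by decide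
  refine ⟨?_, ?_, h_dup, (correcting_pair_iff h_ne).2 h_dup, h_del, ?_⟩
  · simp only [sphere_pDup_one, ← Finset.coe_singleton, ← Finset.coe_insert, Finset.coe_inj]
    decide
  -- Positions 1, 2 and 3 of `011110` all give `01111110`, so this sphere has only four words.
  · simp only [sphere_pDup_one, ← Finset.coe_singleton, ← Finset.coe_insert, Finset.coe_inj]
    decide
  · rw [correcting_pair_iff h_ne, Set.not_disjoint_iff_nonempty_inter]
    exact ⟨_, h_del⟩

end DupPaper
end

section
/- For all integers q ≥ 2, ℓ ≥ 1, n ≥ ℓ and every x ∈ Z_q^n with ℓ-step derivative φ_ℓ(x) = (u, v), the size of the single tandem deletion sphere satisfies |S_{τ^δ,ℓ,1}(x)| = wt_H(σ_ℓ(v)) + 1, where wt_H(σ_ℓ(v)) is the number of nonzero entries of the ℓ-zero signature σ_ℓ(v). -/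
namespace DupPaper

variable {α : Type*}

/-!
Deleting the block of length `ℓ` at position `i` is a tandem deletion exactly when the `ℓ`
derivative entries from `i` on vanish. For `i ≤ j`, the deletions at `i` and at `j` give the same
word exactly when the derivative vanishes on `[i, j)`. So a deletion may be slid to the right inside
its zero run without changing the result, and every result comes from exactly one position that can
be slid no further. Each zero run of length at least `ℓ` contains one such position, and shorter
runs contain none; these long runs are the nonzero entries of the signature. The sphere has the
additional element `x`, which is longer than every deletion result.
-/

section LastWindows

/-- The starting points of the windows of length `ℓ` contained in `s` that cannot be moved one step
to the right inside `s`. They represent the maximal runs of consecutive elements of `s` of length at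
least `ℓ`, each by its last window. -/
def lastWindows (s : Set ℕ) (ℓ : ℕ) : Set ℕ :=
  {i | Set.Ico i (i + ℓ) ⊆ s ∧ i + ℓ ∉ s}

variable {s : Set ℕ} {ℓ : ℕ}

theorem lastWindows_subset (hℓ : 1 ≤ ℓ) : lastWindows s ℓ ⊆ s :=
  fun _ hi => hi.1 ⟨le_rfl, by omega⟩

theorem exists_mem_lastWindows_of_Ico_subset (hs : s.Finite) {i : ℕ}
    (hi : Set.Ico i (i + ℓ) ⊆ s) : ∃ j ∈ lastWindows s ℓ, i ≤ j ∧ Set.Ico i (j + ℓ) ⊆ s := by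
  classical
  have hex : ∃ d, i + d ∉ s := by
    obtain ⟨n, hn, hin⟩ := hs.infinite_compl.exists_gt i
    exact ⟨n - i, by rwa [Nat.add_sub_cancel' hin.le]⟩
  have hrun : Set.Ico i (i + Nat.find hex) ⊆ s := fun k hk => by
    obtain ⟨d, rfl⟩ := Nat.exists_eq_add_of_le hk.1
    exact not_not.mp (Nat.find_min hex (Nat.add_lt_add_iff_left.mp hk.2))
  have hle : ℓ ≤ Nat.find hex := (Nat.le_find_iff hex ℓ).mpr fun d hd =>
    not_not.mpr (hi ⟨Nat.le_add_right i d, by omega⟩)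
  have hend : i + (Nat.find hex - ℓ) + ℓ = i + Nat.find hex := by omega
  rw [← hend] at hrun
  refine ⟨i + (Nat.find hex - ℓ), ⟨?_, ?_⟩, Nat.le_add_right _ _, hrun⟩
  · exact (Set.Ico_subset_Ico_left (Nat.le_add_right _ _)).trans hrun
  · rw [hend]
    exact Nat.find_spec hex

theorem eq_of_mem_lastWindows_of_Ico_subset {i j : ℕ} (hij : i ≤ j) (hi : i ∈ lastWindows s ℓ)
    (hj : j ∈ lastWindows s ℓ) (h : Set.Ico i j ⊆ s) : i = j := by
  by_contra hne
  rcases lt_or_ge (i + ℓ) j with hlt | hge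
  · exact hi.2 (h ⟨Nat.le_add_right i ℓ, hlt⟩)
  · exact hi.2 (hj.1 ⟨hge, by omega⟩)

theorem succ_mem_lastWindows {i : ℕ} :
    i + 1 ∈ lastWindows s ℓ ↔ i ∈ lastWindows ((· + 1) ⁻¹' s) ℓ := by
  have hshift : Set.Ico (i + 1) (i + 1 + ℓ) = (· + 1) '' Set.Ico i (i + ℓ) := by
    rw [Set.image_add_const_Ico, add_right_comm]
  simp only [lastWindows, Set.mem_ofPred_eq, Set.mem_preimage, hshift, Set.image_subset_iff,
    add_right_comm i ℓ 1]

theorem zero_mem_lastWindows_succ :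
    0 ∈ lastWindows s (ℓ + 1) ↔ 0 ∈ s ∧ 0 ∈ lastWindows ((· + 1) ⁻¹' s) ℓ := by
  simp only [lastWindows, Set.mem_ofPred_eq, Set.mem_preimage, zero_add, ← and_assoc,
    Set.subset_def, Set.mem_Ico, zero_le, true_and, Nat.forall_lt_succ_left]

theorem ncard_eq_ncard_preimage_succ_add [Decidable (0 ∈ s)] (hs : s.Finite) :
    s.ncard = ((· + 1) ⁻¹' s).ncard + if 0 ∈ s then 1 else 0 := by
  have hcard : ((· + 1) '' ((· + 1) ⁻¹' s)).ncard = ((· + 1) ⁻¹' s).ncard :=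
    Set.ncard_image_of_injective _ (add_left_injective 1)
  have himage : (· + 1) '' ((· + 1) ⁻¹' s) = s \ {0} := by
    ext (_ | k) <;> simp
  rw [← hcard, himage]
  split_ifs with h
  · exact (Set.ncard_sdiff_singleton_add_one h hs).symm
  · rw [Set.sdiff_singleton_eq_self h, add_zero]

end LastWindows

section ZeroRuns

variable {q ℓ : ℕ}

/-- The set of (0-based) positions of the zero entries of `v`. -/
def zeroPositions (v : List (ZMod q)) : Set ℕ :=
  {k | v[k]? = some 0}

theorem finite_zeroPositions (v : List (ZMod q)) : (zeroPositions v).Finite :=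
  (Set.finite_Iio v.length).subset fun _ hk => (List.getElem?_eq_some_iff.mp hk).1

theorem preimage_succ_zeroPositions_cons (a : ZMod q) (v : List (ZMod q)) :
    (· + 1) ⁻¹' zeroPositions (a :: v) = zeroPositions v := by
  ext k
  simp only [zeroPositions, Set.mem_preimage, Set.mem_ofPred_eq, List.getElem?_cons_succ]

theorem zero_mem_zeroPositions_cons (a : ZMod q) (v : List (ZMod q)) :
    0 ∈ zeroPositions (a :: v) ↔ a = 0 := by
  simp only [zeroPositions, Set.mem_ofPred_eq, List.getElem?_cons_zero, Option.some.injEq]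

theorem zeroRunLengths_cons_of_ne_zero {a : ZMod q} (ha : a ≠ 0) (v : List (ZMod q)) :
    zeroRunLengths (a :: v) = 0 :: zeroRunLengths v := by
  simp only [zeroRunLengths, if_neg ha]

theorem exists_zeroRunLengths_eq_cons (v : List (ZMod q)) :
    ∃ m ms, zeroRunLengths v = m :: ms ∧ zeroRunLengths (0 :: v) = (m + 1) :: ms := by
  suffices h : zeroRunLengths v ≠ [] by
    obtain ⟨m, ms, hm⟩ := List.exists_cons_of_ne_nil h
    exact ⟨m, ms, hm, by simp only [zeroRunLengths, hm, if_true]⟩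
  cases v with
  | nil => simp only [zeroRunLengths, ne_eq, List.cons_ne_nil, not_false_eq_true]
  | cons a v =>
    simp only [zeroRunLengths]
    split_ifs
    · split <;> exact List.cons_ne_nil _ _
    · exact List.cons_ne_nil _ _

theorem zero_mem_lastWindows_zeroPositions (v : List (ZMod q)) :
    0 ∈ lastWindows (zeroPositions v) ℓ ↔ (zeroRunLengths v).head? = some ℓ := by
  induction v generalizing ℓ with
  | nil =>
    cases ℓ with
    | zero => simp [lastWindows, zeroPositions, zeroRunLengths]
    | succ ℓ => simp [zero_mem_lastWindows_succ, zeroPositions, zeroRunLengths]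
  | cons a v ih =>
    by_cases ha : a = 0
    · subst ha
      obtain ⟨m, ms, hv, h0v⟩ := exists_zeroRunLengths_eq_cons v
      cases ℓ with
      | zero => simp [lastWindows, zero_mem_zeroPositions_cons, h0v]
      | succ ℓ =>
        simp [zero_mem_lastWindows_succ, zero_mem_zeroPositions_cons,
          preimage_succ_zeroPositions_cons, ih, hv, h0v]
    · rw [zeroRunLengths_cons_of_ne_zero ha]
      cases ℓ with
      | zero => simp [lastWindows, zero_mem_zeroPositions_cons, ha]
      | succ ℓ => simp [zero_mem_lastWindows_succ, zero_mem_zeroPositions_cons, ha]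

theorem countP_zeroRunLengths_cons (hℓ : 1 ≤ ℓ) (a : ZMod q) (v : List (ZMod q)) :
    (zeroRunLengths (a :: v)).countP (ℓ ≤ ·) = (zeroRunLengths v).countP (ℓ ≤ ·) +
      if (zeroRunLengths (a :: v)).head? = some ℓ then 1 else 0 := by
  by_cases ha : a = 0
  · obtain ⟨m, ms, hv, h0v⟩ := exists_zeroRunLengths_eq_cons v
    simp only [ha, hv, h0v, List.countP_cons, List.head?_cons, Option.some.injEq,
      decide_eq_true_eq]
    grind
  · simp only [zeroRunLengths_cons_of_ne_zero ha, List.countP_cons, List.head?_cons,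
      Option.some.injEq, decide_eq_true_eq]
    grind

theorem ncard_lastWindows_zeroPositions (hℓ : 1 ≤ ℓ) (v : List (ZMod q)) :
    (lastWindows (zeroPositions v) ℓ).ncard = (zeroRunLengths v).countP (ℓ ≤ ·) := by
  classical
  induction v with
  | nil =>
    have hempty : lastWindows (zeroPositions ([] : List (ZMod q))) ℓ = ∅ :=
      Set.subset_empty_iff.mp ((lastWindows_subset hℓ).trans (by simp [zeroPositions]))
    simp only [hempty, Set.ncard_empty, zeroRunLengths, List.countP_singleton]
    grind
  | cons a v ih =>
    have hfin := (finite_zeroPositions (a :: v)).subset (lastWindows_subset hℓ)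
    have htail : (· + 1) ⁻¹' lastWindows (zeroPositions (a :: v)) ℓ =
        lastWindows (zeroPositions v) ℓ := by
      ext i
      rw [Set.mem_preimage, succ_mem_lastWindows, preimage_succ_zeroPositions_cons]
    rw [ncard_eq_ncard_preimage_succ_add hfin, htail, ih, countP_zeroRunLengths_cons hℓ]
    simp only [zero_mem_lastWindows_zeroPositions]

theorem length_filter_sig_ne_zero (hℓ : 1 ≤ ℓ) (x : List (ZMod q)) :
    ((sig q ℓ x).filter (fun m => m ≠ 0)).length =
      (zeroRunLengths (derivV q ℓ x)).countP (ℓ ≤ ·) := by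
  rw [← List.countP_eq_length_filter, sig, List.countP_map]
  refine List.countP_congr fun m _ => ?_
  simp [Nat.div_eq_zero_iff, Nat.one_le_iff_ne_zero.mp hℓ]

end ZeroRuns

section TandemDeletion

/-- The set of positions at which `x` and its shift by `ℓ` both have a letter and these letters
coincide. This is the zero set of the `ℓ`-step derivative, expressed without subtraction of
letters. -/
def shiftAgreement (ℓ : ℕ) (x : List α) : Set ℕ :=
  {k | k + ℓ < x.length ∧ x[k + ℓ]? = x[k]?}

/-- The word `x` without its block of length `ℓ` at position `i`. When the tandem deletion
`τ^δ_{i,ℓ}` is defined at `x`, this is its result. -/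
def eraseBlock (ℓ i : ℕ) (x : List α) : List α :=
  x.take i ++ x.drop (i + ℓ)

variable {ℓ : ℕ} {x y : List α}

theorem zeroPositions_derivV {q : ℕ} (x : List (ZMod q)) :
    zeroPositions (derivV q ℓ x) = shiftAgreement ℓ x := by
  ext k
  simp only [zeroPositions, shiftAgreement, derivV, Set.mem_ofPred_eq, List.getElem?_zipWith,
    List.getElem?_drop, Nat.add_comm ℓ k]
  by_cases h : k + ℓ < x.length
  · have hk : k < x.length := by omega
    simp [h, hk, sub_eq_zero]
  · simp [h]

theorem finite_shiftAgreement (ℓ : ℕ) (x : List α) : (shiftAgreement ℓ x).Finite :=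
  (Set.finite_Iio x.length).subset fun _ hk => (Nat.le_add_right _ ℓ).trans_lt hk.1

theorem add_add_le_length_of_Ico_subset (hℓ : 1 ≤ ℓ) {i : ℕ}
    (h : Set.Ico i (i + ℓ) ⊆ shiftAgreement ℓ x) : i + ℓ + ℓ ≤ x.length := by
  have hlast : i + (ℓ - 1) + ℓ < x.length := (h ⟨Nat.le_add_right _ _, by omega⟩).1
  omega

theorem getElem?_eraseBlock (ℓ i : ℕ) (x : List α) (k : ℕ) :
    (eraseBlock ℓ i x)[k]? = if k < i then x[k]? else x[k + ℓ]? := by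
  simp only [eraseBlock, List.getElem?_append, List.length_take, List.getElem?_drop,
    List.getElem?_take]
  grind

theorem eraseBlock_eq_eraseBlock_iff {i j : ℕ} (hij : i ≤ j) (hj : j + ℓ ≤ x.length) :
    eraseBlock ℓ i x = eraseBlock ℓ j x ↔ Set.Ico i j ⊆ shiftAgreement ℓ x := by
  simp only [List.ext_getElem?_iff, getElem?_eraseBlock]
  constructor
  · rintro h k ⟨hik, hkj⟩
    refine ⟨by omega, ?_⟩
    simpa only [if_neg hik.not_gt, if_pos hkj] using h k
  · intro h k
    by_cases hk : k ∈ Set.Ico i j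
    · rw [if_neg hk.1.not_gt, if_pos hk.2, (h hk).2]
    · have hside : k < i ↔ k < j := by grind
      simp only [hside]

theorem take_drop_eq_take_drop_add_iff {i : ℕ} (hi : i + ℓ + ℓ ≤ x.length) :
    (x.drop i).take ℓ = (x.drop (i + ℓ)).take ℓ ↔
      Set.Ico i (i + ℓ) ⊆ shiftAgreement ℓ x := by
  simp only [List.ext_getElem?_iff, List.getElem?_take, List.getElem?_drop]
  constructor
  · rintro h k ⟨hik, hki⟩
    obtain ⟨d, rfl⟩ := Nat.exists_eq_add_of_le hik
    refine ⟨by omega, ?_⟩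
    have hd : d < ℓ := by omega
    simpa only [if_pos hd, add_right_comm i ℓ d] using (h d).symm
  · intro h d
    split_ifs with hd
    · rw [add_right_comm, (h ⟨Nat.le_add_right i d, by omega⟩).2]
    · rfl

theorem tDel_iff_exists_take_drop :
    TDel ℓ x y ↔ ∃ i, i + ℓ + ℓ ≤ x.length ∧
      (x.drop i).take ℓ = (x.drop (i + ℓ)).take ℓ ∧ y = eraseBlock ℓ i x := by
  constructor
  · rintro ⟨u, v, w, rfl, rfl, rfl⟩
    refine ⟨u.length, by simp [add_assoc], ?_, ?_⟩ <;>
      simp [eraseBlock, -List.drop_drop]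
  · rintro ⟨i, hi, hv, rfl⟩
    have hsplit : ∀ k, x.drop k = (x.drop k).take ℓ ++ x.drop (k + ℓ) := fun k => by
      rw [← List.drop_drop, List.take_append_drop]
    have hlen : ((x.drop i).take ℓ).length = ℓ := by
      rw [List.length_take, List.length_drop]
      omega
    refine ⟨x.take i, (x.drop i).take ℓ, x.drop (i + ℓ + ℓ), hlen, ?_, ?_⟩
    · conv_lhs => rw [← List.take_append_drop i x, hsplit i, hsplit (i + ℓ), ← hv]
      simp only [List.append_assoc]
    · rw [eraseBlock, hsplit (i + ℓ), ← hv, List.append_assoc]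

theorem tDel_iff_exists_Ico_subset (hℓ : 1 ≤ ℓ) :
    TDel ℓ x y ↔ ∃ i, Set.Ico i (i + ℓ) ⊆ shiftAgreement ℓ x ∧ y = eraseBlock ℓ i x := by
  rw [tDel_iff_exists_take_drop]
  refine exists_congr fun i => ⟨fun ⟨hi, hv, hy⟩ => ?_, fun ⟨h, hy⟩ => ?_⟩
  · exact ⟨(take_drop_eq_take_drop_add_iff hi).mp hv, hy⟩
  · have hi := add_add_le_length_of_Ico_subset hℓ h
    exact ⟨hi, (take_drop_eq_take_drop_add_iff hi).mpr h, hy⟩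

theorem setOfPred_tDel_eq_image_lastWindows (hℓ : 1 ≤ ℓ) (x : List α) :
    {y | TDel ℓ x y} = (eraseBlock ℓ · x) '' lastWindows (shiftAgreement ℓ x) ℓ := by
  ext y
  rw [Set.mem_ofPred_eq, tDel_iff_exists_Ico_subset hℓ]
  constructor
  · rintro ⟨i, hi, rfl⟩
    obtain ⟨j, hj, hij, hrun⟩ :=
      exists_mem_lastWindows_of_Ico_subset (finite_shiftAgreement ℓ x) hi
    have hjx := add_add_le_length_of_Ico_subset hℓ hj.1
    refine ⟨j, hj, ((eraseBlock_eq_eraseBlock_iff hij (by omega)).mpr ?_).symm⟩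
    exact (Set.Ico_subset_Ico_right (Nat.le_add_right j ℓ)).trans hrun
  · rintro ⟨i, hi, rfl⟩
    exact ⟨i, hi.1, rfl⟩

theorem injOn_eraseBlock_lastWindows (hℓ : 1 ≤ ℓ) (x : List α) :
    Set.InjOn (eraseBlock ℓ · x) (lastWindows (shiftAgreement ℓ x) ℓ) := by
  intro i hi j hj hxy
  wlog hij : i ≤ j generalizing i j
  · exact (this hj hi hxy.symm (le_of_not_ge hij)).symm
  have hjx := add_add_le_length_of_Ico_subset hℓ hj.1
  exact eq_of_mem_lastWindows_of_Ico_subset hij hi hj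
    ((eraseBlock_eq_eraseBlock_iff hij (by omega)).mp hxy)

theorem finite_setOfPred_tDel (hℓ : 1 ≤ ℓ) (x : List α) : {y | TDel ℓ x y}.Finite := by
  rw [setOfPred_tDel_eq_image_lastWindows hℓ]
  exact ((finite_shiftAgreement ℓ x).subset (lastWindows_subset hℓ)).image _

theorem ncard_setOfPred_tDel (hℓ : 1 ≤ ℓ) (x : List α) :
    {y | TDel ℓ x y}.ncard = (lastWindows (shiftAgreement ℓ x) ℓ).ncard := by
  rw [setOfPred_tDel_eq_image_lastWindows hℓ, (injOn_eraseBlock_lastWindows hℓ x).ncard_image]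

theorem not_tDel_self (hℓ : 1 ≤ ℓ) (x : List α) : ¬TDel ℓ x x := by
  rintro ⟨u, v, w, hv, hx, hx'⟩
  have hlen := congrArg List.length (hx.symm.trans hx')
  simp only [List.length_append] at hlen
  omega

theorem sphere_one (rel : List α → List α → Prop) (x : List α) :
    sphere rel 1 x = insert x {y | rel x y} := by
  ext y
  simp [sphere, reachK, Nat.le_one_iff_eq_zero_or_eq_one, or_and_right, exists_or, eq_comm]

end TandemDeletion

/-- The size of the single tandem deletion sphere:
`|S_{τ^δ,ℓ,1}(x)| = wt_H(σ_ℓ(v)) + 1` where `φ_ℓ(x) = (u,v)`. -/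
theorem stmt6 (q ℓ n : ℕ) (hq : 2 ≤ q) (hℓ : 1 ≤ ℓ) (hn : ℓ ≤ n)
    (x : List (ZMod q)) (hx : x.length = n) :
    (sphere (TDel ℓ) 1 x).ncard = ((sig q ℓ x).filter (fun m => m ≠ 0)).length + 1 := by
  have hself : x ∉ {y | TDel ℓ x y} := not_tDel_self hℓ x
  rw [sphere_one, Set.ncard_insert_of_notMem hself (finite_setOfPred_tDel hℓ x),
    ncard_setOfPred_tDel hℓ, ← zeroPositions_derivV, ncard_lastWindows_zeroPositions hℓ,
    length_filter_sig_ne_zero hℓ]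

end DupPaper
end
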